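/- Let n ≥ 1, m ≥ 1, and let γ_{ij} be positive integers for 1 ≤ i ≤ n, 1 ≤ j ≤ m. For each j set γ_j = ∑_{i=1}^n γ_{ij}, let P_j(i) = γ_{ij}/γ_j, let E(P_j) = −∑_{i=1}^n P_j(i)·ln P_j(i), and let B(γ_{1j}, …, γ_{nj}) = (∏_{i=1}^n (γ_{ij} − 1)!)/(γ_j − 1)!. Then there exist real numbers d_1, …, d_m, each satisfying (n/2)·ln(2π) − 1 ≤ d_j ≤ n − (1/2)·ln(2π), such that ∏_{j=1}^m B(γ_{1j}, …, γ_{nj}) = exp(∑_{j=1}^m (−γ_j·E(P_j) − (1/2)·(n−1)·ln γ_j − (1/2)·∑_{i=1}^n ln P_j(i) + d_j)). -/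

import Mathlib

open Real Finset

/-!
Write `log (g - 1)! = (g - 1/2) log g - g + r(g)` for `g ≥ 1`. The remainder `r(g)` equals
`log (stirlingSeq g) + (log 2) / 2`; since the Stirling sequence decreases from `e / √2` (at `g = 1`)
to `√π`, one has `(1/2) log (2π) ≤ r(g) ≤ 1`. In the logarithm of a beta function the linear
terms `-g` cancel, the terms `(g - 1/2) log g` combine to the entropy expression, and the
remainders leave `d = ∑ i, r(γ i) - r(∑ i, γ i)`, whose bounds are immediate.
-/

/-- The error term in Stirling's approximation
`log Γ(g) ≈ (g - 1/2) log g - g` at a positive integer `g`. -/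
noncomputable def stirlingRemainder (g : ℕ) : ℝ :=
  Real.log ((g - 1).factorial : ℝ) - ((g : ℝ) - 1 / 2) * Real.log g + g

lemma stirlingRemainder_eq {g : ℕ} (hg : 0 < g) :
    stirlingRemainder g = Real.log (Stirling.stirlingSeq g) + Real.log 2 / 2 := by
  have hg' : (g : ℝ) ≠ 0 := by positivity
  have hfac : Real.log (g.factorial : ℝ) = Real.log g + Real.log ((g - 1).factorial : ℝ) := by
    rw [← Nat.mul_factorial_pred hg.ne', Nat.cast_mul, Real.log_mul hg' (by positivity)]
  rw [Stirling.log_stirlingSeq_formula, stirlingRemainder, hfac,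
    Real.log_mul two_ne_zero hg', Real.log_div hg' (Real.exp_ne_zero 1), Real.log_exp]
  ring

lemma le_stirlingRemainder {g : ℕ} (hg : 0 < g) :
    (1 / 2 : ℝ) * Real.log (2 * Real.pi) ≤ stirlingRemainder g := by
  have h := Real.log_le_log (by positivity) (Stirling.sqrt_pi_le_stirlingSeq hg.ne')
  rw [Real.log_sqrt Real.pi_pos.le] at h
  rw [stirlingRemainder_eq hg, Real.log_mul two_ne_zero Real.pi_ne_zero]
  linarith

lemma stirlingRemainder_le {g : ℕ} (hg : 0 < g) : stirlingRemainder g ≤ 1 := by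
  obtain ⟨k, rfl⟩ := Nat.exists_eq_succ_of_ne_zero hg.ne'
  have h : Real.log (Stirling.stirlingSeq (k + 1)) ≤ Real.log (Stirling.stirlingSeq 1) :=
    Stirling.log_stirlingSeq'_antitone (Nat.zero_le k)
  rw [Stirling.stirlingSeq_one, Real.log_div (Real.exp_ne_zero 1) (by positivity),
    Real.log_exp, Real.log_sqrt zero_le_two] at h
  rw [stirlingRemainder_eq hg]
  simp only [Nat.succ_eq_add_one]
  linarith

/-- The formula for a single column, with the explicit constant
`d = ∑ i, r(g i) - r(∑ i, g i)`. -/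
lemma beta_eq_exp_entropy {n : ℕ} (hn : 1 ≤ n) (g : Fin n → ℕ) (hg : ∀ i, 0 < g i) :
    (∏ i, ((g i - 1).factorial : ℝ)) / (((∑ i, g i) - 1).factorial : ℝ) =
      Real.exp (-((∑ i, g i : ℕ) : ℝ) *
          (-∑ i, ((g i : ℝ) / ((∑ k, g k : ℕ) : ℝ)) *
            Real.log ((g i : ℝ) / ((∑ k, g k : ℕ) : ℝ)))
        - (1 / 2 : ℝ) * ((n : ℝ) - 1) * Real.log ((∑ i, g i : ℕ) : ℝ)
        - (1 / 2 : ℝ) * ∑ i, Real.log ((g i : ℝ) / ((∑ k, g k : ℕ) : ℝ))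
        + (∑ i, stirlingRemainder (g i) - stirlingRemainder (∑ i, g i))) := by
  have hG : 0 < ∑ i, g i := Finset.sum_pos (fun i _ => hg i) ⟨⟨0, hn⟩, Finset.mem_univ _⟩
  have hsum : ((∑ i, g i : ℕ) : ℝ) = ∑ i, (g i : ℝ) := Nat.cast_sum _ _
  generalize (∑ i, g i) = G at hG hsum ⊢
  have hG' : (G : ℝ) ≠ 0 := by positivity
  have hlog : ∀ i, Real.log ((g i : ℝ) / G) = Real.log (g i) - Real.log G := fun i =>
    Real.log_div (Nat.cast_ne_zero.2 (hg i).ne') hG'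
  have hent : (G : ℝ) * ∑ i, ((g i : ℝ) / G) * Real.log ((g i : ℝ) / G) =
      ∑ i, (g i : ℝ) * Real.log (g i) - G * Real.log G := by
    conv_rhs => rw [hsum, Finset.sum_mul, ← Finset.sum_sub_distrib, ← hsum]
    rw [Finset.mul_sum]
    refine Finset.sum_congr rfl fun i _ => ?_
    rw [hlog]
    field_simp
  have hlogs : ∑ i, Real.log ((g i : ℝ) / G) = ∑ i, Real.log (g i) - n * Real.log G := by
    simp [hlog, Finset.sum_sub_distrib]
  have hrem : ∑ i, stirlingRemainder (g i) = ∑ i, Real.log ((g i - 1).factorial : ℝ)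
      - (∑ i, (g i : ℝ) * Real.log (g i) - (1 / 2) * ∑ i, Real.log (g i)) + G := by
    simp only [stirlingRemainder, Finset.sum_add_distrib, Finset.sum_sub_distrib, sub_mul,
      Finset.mul_sum, hsum]
  rw [← Real.exp_log (show 0 < (∏ i, ((g i - 1).factorial : ℝ)) / ((G - 1).factorial : ℝ) by
    positivity)]
  congr 1
  rw [Real.log_div (by positivity) (by positivity),
    Real.log_prod (fun i _ => by positivity), neg_mul_neg, hent, hlogs, hrem, stirlingRemainder]
  ring

/-- The paper's theorem in Section 5.4: a product of `m` multivariate beta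
functions with positive-integer parameters `γ_{ij}` (columns `j`, rows `i`),
with per-column sums `γ_j = ∑_i γ_{ij}`, empirical distributions
`P_j(i) = γ_{ij}/γ_j` and entropies `E(P_j) = −∑_i P_j(i) ln P_j(i)`, equals
`exp(∑_j (−γ_j E(P_j) − (1/2)(n−1) ln γ_j − (1/2) ∑_i ln P_j(i) + d_j))` for
constants `d_j ∈ [(n/2)ln(2π) − 1, n − (1/2)ln(2π)]`. -/
theorem prod_beta_entropy_formula (n m : ℕ) (hn : 1 ≤ n) (hm : 1 ≤ m)
    (γ : Fin n → Fin m → ℕ) (hγ : ∀ i j, 0 < γ i j) :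
    ∃ d : Fin m → ℝ,
      (∀ j, ((n : ℝ) / 2) * Real.log (2 * Real.pi) - 1 ≤ d j ∧
            d j ≤ (n : ℝ) - (1 / 2 : ℝ) * Real.log (2 * Real.pi)) ∧
      (∏ j, (∏ i, (Nat.factorial (γ i j - 1) : ℝ)) /
          (Nat.factorial ((∑ i, γ i j) - 1) : ℝ)) =
        Real.exp (∑ j,
          (-(((∑ i, γ i j : ℕ)) : ℝ) *
              (-∑ i, ((γ i j : ℝ) / ((∑ k, γ k j : ℕ) : ℝ)) *
                Real.log ((γ i j : ℝ) / ((∑ k, γ k j : ℕ) : ℝ)))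
            - (1 / 2 : ℝ) * ((n : ℝ) - 1) * Real.log ((∑ i, γ i j : ℕ) : ℝ)
            - (1 / 2 : ℝ) * ∑ i, Real.log ((γ i j : ℝ) / ((∑ k, γ k j : ℕ) : ℝ))
            + d j)) := by
  have hG : ∀ j, 0 < ∑ i, γ i j := fun j =>
    Finset.sum_pos (fun i _ => hγ i j) ⟨⟨0, hn⟩, Finset.mem_univ _⟩
  refine ⟨fun j => ∑ i, stirlingRemainder (γ i j) - stirlingRemainder (∑ i, γ i j),
    fun j => ⟨?_, ?_⟩, ?_⟩
  · have h1 := Finset.card_nsmul_le_sum Finset.univ (fun i => stirlingRemainder (γ i j)) _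
      fun i _ => le_stirlingRemainder (hγ i j)
    have h2 := stirlingRemainder_le (hG j)
    simp only [Finset.card_univ, Fintype.card_fin, nsmul_eq_mul] at h1
    linarith
  · have h1 := Finset.sum_le_card_nsmul Finset.univ (fun i => stirlingRemainder (γ i j)) _
      fun i _ => stirlingRemainder_le (hγ i j)
    have h2 := le_stirlingRemainder (hG j)
    simp only [Finset.card_univ, Fintype.card_fin, nsmul_eq_mul, mul_one] at h1
    linarith
  · rw [Real.exp_sum]
    exact Finset.prod_congr rfl fun j _ =>
      beta_eq_exp_entropy hn (fun i => γ i j) fun i => hγ i j
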